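/- Let k_p, k_q ≥ 1 be integers, b_p, b_q > 0 and γ ≥ 0 be reals, and let ρ_1, ρ_2 > 0 be radii with γ ρ_1 / b_p < ρ_2. Then (2/(2πi)²) ∮_{|z|=ρ_1} ∮_{|w|=ρ_2} (z + b_p/z)^{k_p} (w + b_q/w)^{k_q} · (γ/b_p) · (γ z/b_p − w)^{−2} dw dz = Σ_{r=1}^{min(k_p,k_q)} 2r · β(k_p, r) β(k_q, r) · γ^r · b_p^{(k_p − r)/2} b_q^{(k_q − r)/2}, where ∮_{|z|=ρ} f(z) dz denotes the counterclockwise contour integral ∫_0^{2π} f(ρ e^{iθ}) i ρ e^{iθ} dθ. -/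

import Mathlib

/-!
Both powers are expanded by the binomial theorem, after which each contour integral is a residue.
For `|a| < R` one has `∮ w ^ n / (w - a) ^ 2 dw = 2πi n a ^ (n - 1)` when `n > 0` and `0` when
`n ≤ 0` (`integral_zpow_mul_sq_inv`), so the `w`-integral is a polynomial in `z` with one term for
each positive exponent `r` of `(w + b_q / w) ^ k_q`. The `z`-integral of `(z + b_p / z) ^ k_p`
against `z ^ (r - 1)` picks out the coefficient of `z ^ (-r)` (`integral_outer_circle`). Both coefficients
are binomial coefficients of the form `β(k, r)` (`betaCoef_mul_pow`), and the powers of `b_p`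
combine as `(k_p - r) / 2 + r - r`.

For `n ≥ 0` the residue formula is Cauchy's formula for the derivative of `w ^ n`. For `n < 0` and
`a ≠ 0` it follows by descending induction from `w ^ (n + 1) - a w ^ n = w ^ n (w - a)`, starting
from `∮ dw / (w - a) = ∮ dw / w`; for `a = 0` the integrand is a power of `w`.
-/


open MeasureTheory Real Finset

noncomputable section

/-- `β(k,r) = binom(k, (k-r)/2)` if `r ≤ k` and `k - r` is even, and `0` otherwise. -/
def betaCoef (k r : ℕ) : ℝ :=
  if r ≤ k ∧ (k - r) % 2 = 0 then (k.choose ((k - r) / 2) : ℝ) else 0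

/-- The counterclockwise contour integral `∮_{|z|=ρ} f(z) dz = ∫_0^{2π} f(ρe^{iθ}) iρe^{iθ} dθ`. -/
def circleIntegral' (f : ℂ → ℂ) (ρ : ℝ) : ℂ :=
  ∫ θ in (0:ℝ)..(2 * π), f ((ρ : ℂ) * Complex.exp ((θ : ℂ) * Complex.I)) *
    (Complex.I * (ρ : ℂ) * Complex.exp ((θ : ℂ) * Complex.I))

lemma circleIntegral'_eq (f : ℂ → ℂ) (ρ : ℝ) : circleIntegral' f ρ = ∮ z in C(0, ρ), f z := by
  unfold circleIntegral' circleIntegral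
  refine intervalIntegral.integral_congr fun θ _ => ?_
  simp only [deriv_circleMap, circleMap, smul_eq_mul, zero_add]
  ring

lemma sphere_ne_zero {R : ℝ} (hR : 0 < R) {w : ℂ} (hw : w ∈ Metric.sphere (0 : ℂ) R) : w ≠ 0 := by
  rintro rfl
  simp at hw
  exact hR.ne hw

lemma sphere_sub_ne_zero {R : ℝ} {a w : ℂ} (ha : ‖a‖ < R)
    (hw : w ∈ Metric.sphere (0 : ℂ) R) : w - a ≠ 0 := by
  intro h
  rw [sub_eq_zero] at h
  subst h
  simp at hw
  exact ha.ne hw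

lemma circleIntegrable_zpow_mul {R : ℝ} (hR : 0 < R) {g : ℂ → ℂ} (n : ℤ)
    (hg : ContinuousOn g (Metric.sphere 0 R)) :
    CircleIntegrable (fun w => w ^ n * g w) 0 R :=
  ContinuousOn.circleIntegrable hR.le
    ((continuousOn_id.zpow₀ n fun _ hw => Or.inl (sphere_ne_zero hR hw)).mul hg)

lemma circleIntegrable_const_mul_zpow_mul {R : ℝ} (hR : 0 < R) {g : ℂ → ℂ} (c : ℂ) (n : ℤ)
    (hg : ContinuousOn g (Metric.sphere 0 R)) :
    CircleIntegrable (fun w => c * (w ^ n * g w)) 0 R :=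
  ContinuousOn.circleIntegrable hR.le (continuousOn_const.mul
    ((continuousOn_id.zpow₀ n fun _ hw => Or.inl (sphere_ne_zero hR hw)).mul hg))

lemma continuousOn_sub_inv {R : ℝ} {a : ℂ} (ha : ‖a‖ < R) :
    ContinuousOn (fun w : ℂ => (w - a)⁻¹) (Metric.sphere 0 R) :=
  (continuousOn_id.sub continuousOn_const).inv₀ fun _ hw => sphere_sub_ne_zero ha hw

lemma continuousOn_sub_sq_inv {R : ℝ} {a : ℂ} (ha : ‖a‖ < R) :
    ContinuousOn (fun w : ℂ => ((w - a) ^ 2)⁻¹) (Metric.sphere 0 R) :=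
  ((continuousOn_id.sub continuousOn_const).pow 2).inv₀ fun _ hw =>
    pow_ne_zero 2 (sphere_sub_ne_zero ha hw)

lemma circle_integral_zpow {R : ℝ} (hR : 0 < R) (n : ℤ) :
    (∮ w in C(0, R), w ^ n) = if n = -1 then 2 * (π : ℂ) * Complex.I else 0 := by
  split_ifs with h
  · subst h
    simpa using circleIntegral.integral_sub_center_inv (0 : ℂ) hR.ne'
  · simpa using circleIntegral.integral_sub_zpow_of_ne h (0 : ℂ) 0 R

/-- One step of the descending recursion in the exponent. -/
lemma integral_zpow_succ_mul {R : ℝ} (hR : 0 < R) {a : ℂ} (g h : ℂ → ℂ) (n : ℤ)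
    (hg : ContinuousOn g (Metric.sphere 0 R))
    (hgh : ∀ w ∈ Metric.sphere (0 : ℂ) R, (w - a) * g w = h w) :
    (∮ w in C(0, R), w ^ (n + 1) * g w) - a * (∮ w in C(0, R), w ^ n * g w)
      = ∮ w in C(0, R), w ^ n * h w := by
  rw [← circleIntegral.integral_const_mul, ← circleIntegral.integral_sub
    (circleIntegrable_zpow_mul hR _ hg)
    (circleIntegrable_const_mul_zpow_mul hR a n hg)]
  refine circleIntegral.integral_congr hR.le fun w hw => ?_
  rw [← hgh w hw, zpow_add_one₀ (sphere_ne_zero hR hw)]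
  ring

lemma integral_neg_zpow_mul_inv {R : ℝ} (hR : 0 < R) {a : ℂ} (ha : ‖a‖ < R) (ha0 : a ≠ 0)
    (m : ℕ) : (∮ w in C(0, R), w ^ (-(m : ℤ) - 1) * (w - a)⁻¹) = 0 := by
  have step (n : ℤ) := integral_zpow_succ_mul hR (a := a) (fun w => (w - a)⁻¹) (fun _ => 1) n
    (continuousOn_sub_inv ha) (fun w hw => mul_inv_cancel₀ (sphere_sub_ne_zero ha hw))
  simp only [mul_one, circle_integral_zpow hR] at step
  induction m with
  | zero =>
    have h := step (-1)
    have h0 := circleIntegral.integral_sub_inv_of_mem_ball (c := 0) (w := a) (R := R) (by simpa)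
    simpa [h0, ha0] using h
  | succ m ih =>
    have h := step (-(m : ℤ) - 1 - 1)
    rw [sub_add_cancel, ih, if_neg (by omega)] at h
    have h' : (-((m + 1 : ℕ) : ℤ) - 1) = -(m : ℤ) - 1 - 1 := by push_cast; ring
    rw [h']
    simpa [ha0] using h

lemma integral_pow_mul_sq_inv {R : ℝ} {a : ℂ} (ha : ‖a‖ < R) (n : ℕ) :
    (∮ w in C(0, R), w ^ (n : ℤ) * ((w - a) ^ 2)⁻¹)
      = 2 * (π : ℂ) * Complex.I * (n * a ^ (n - 1)) := by
  have h := Complex.two_pi_I_inv_smul_circleIntegral_sub_sq_inv_smul_of_differentiable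
    (U := Set.univ) isOpen_univ (c := 0) (w₀ := a) (R := R) (f := fun w : ℂ => w ^ n)
    (Set.subset_univ _) (differentiable_pow n).differentiableOn (by simpa)
  rw [inv_smul_eq_iff₀ Complex.two_pi_I_ne_zero] at h
  simp only [smul_eq_mul, deriv_pow_field] at h
  rw [← h]
  refine congrArg (fun f : ℂ → ℂ => ∮ w in C(0, R), f w) (funext fun w => ?_)
  rw [zpow_natCast, mul_comm]

lemma integral_neg_zpow_mul_sq_inv {R : ℝ} (hR : 0 < R) {a : ℂ} (ha : ‖a‖ < R) (m : ℕ) :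
    (∮ w in C(0, R), w ^ (-(m : ℤ)) * ((w - a) ^ 2)⁻¹) = 0 := by
  rcases eq_or_ne a 0 with rfl | ha0
  · have h0 : (∮ w in C(0, R), w ^ (-(m : ℤ) - 2)) = 0 := by
      rw [circle_integral_zpow hR, if_neg (by omega)]
    refine Eq.trans ?_ h0
    refine circleIntegral.integral_congr hR.le fun w hw => ?_
    simp only [sub_zero]
    rw [zpow_sub₀ (sphere_ne_zero hR hw), div_eq_mul_inv]
    norm_cast
  induction m with
  | zero => simpa using integral_pow_mul_sq_inv ha 0
  | succ m ih =>
    have h := integral_zpow_succ_mul hR (a := a) (fun w => ((w - a) ^ 2)⁻¹) (fun w => (w - a)⁻¹)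
      (-(m : ℤ) - 1) (continuousOn_sub_sq_inv ha)
      (fun w hw => by have := sphere_sub_ne_zero ha hw; field_simp)
    rw [sub_add_cancel, ih, integral_neg_zpow_mul_inv hR ha ha0] at h
    have h' : (-((m + 1 : ℕ) : ℤ)) = -(m : ℤ) - 1 := by push_cast; ring
    rw [h']
    simpa [ha0] using h

/-- The residue formula for `w ^ n / (w - a) ^ 2` on a circle enclosing both `0` and `a`, with all
integers `n` treated at once. -/
lemma integral_zpow_mul_sq_inv {R : ℝ} (hR : 0 < R) {a : ℂ} (ha : ‖a‖ < R) (n : ℤ) :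
    (∮ w in C(0, R), w ^ n * ((w - a) ^ 2)⁻¹)
      = 2 * (π : ℂ) * Complex.I * (n.toNat * a ^ (n.toNat - 1)) := by
  rcases le_total 0 n with h | h
  · lift n to ℕ using h
    simpa using integral_pow_mul_sq_inv ha n
  · obtain ⟨m, rfl⟩ : ∃ m : ℕ, n = -(m : ℤ) := ⟨n.natAbs, by omega⟩
    simpa using integral_neg_zpow_mul_sq_inv hR ha m

/-- The coefficient of `x ^ r` in `(x + b / x) ^ k`, written as a sum over the binomial expansion
with at most one nonzero term. -/
lemma betaCoef_mul_pow (k r : ℕ) (b : ℂ) :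
    (betaCoef k r : ℂ) * b ^ ((k - r) / 2)
      = ∑ j ∈ range (k + 1), if k = r + 2 * j then (k.choose j : ℂ) * b ^ j else 0 := by
  unfold betaCoef
  split_ifs with h
  · rw [Finset.sum_eq_single ((k - r) / 2), if_pos (by omega)]
    · simp
    · intro j _ hj
      exact if_neg (by omega)
    · intro hj
      exact absurd (Finset.mem_range.2 (by omega)) hj
  · rw [Finset.sum_eq_zero fun j _ => if_neg (by omega)]
    simp

lemma add_div_pow {x : ℂ} (hx : x ≠ 0) (b : ℂ) (k : ℕ) :
    (x + b / x) ^ k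
      = ∑ j ∈ range (k + 1), (k.choose j : ℂ) * b ^ j * x ^ ((k : ℤ) - 2 * j) := by
  rw [add_comm, add_pow]
  refine Finset.sum_congr rfl fun j hj => ?_
  have hj : j ≤ k := by simpa [Nat.lt_succ_iff] using hj
  have h : ((k : ℤ) - 2 * j) = ((k - j : ℕ) : ℤ) - (j : ℤ) := by omega
  rw [h, zpow_sub₀ hx, zpow_natCast, zpow_natCast, div_pow]
  ring

lemma integral_inner_circle (k : ℕ) {R : ℝ} (hR : 0 < R) {a : ℂ} (ha : ‖a‖ < R) (b : ℂ) :
    (∮ w in C(0, R), (w + b / w) ^ k * ((w - a) ^ 2)⁻¹)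
      = 2 * (π : ℂ) * Complex.I *
        ∑ r ∈ Icc 1 k, (betaCoef k r : ℂ) * b ^ ((k - r) / 2) * (r * a ^ (r - 1)) := by
  have h1 : (∮ w in C(0, R), (w + b / w) ^ k * ((w - a) ^ 2)⁻¹)
      = ∮ w in C(0, R), ∑ j ∈ range (k + 1),
        (k.choose j : ℂ) * b ^ j * (w ^ ((k : ℤ) - 2 * j) * ((w - a) ^ 2)⁻¹) := by
    refine circleIntegral.integral_congr hR.le fun w hw => ?_
    rw [add_div_pow (sphere_ne_zero hR hw), Finset.sum_mul]
    exact Finset.sum_congr rfl fun j _ => by ring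
  rw [h1, circleIntegral.integral_fun_sum]
  swap
  · intro j _
    exact circleIntegrable_const_mul_zpow_mul hR _ _ (continuousOn_sub_sq_inv ha)
  simp only [circleIntegral.integral_const_mul, integral_zpow_mul_sq_inv hR ha, betaCoef_mul_pow,
    Finset.sum_mul]
  rw [Finset.sum_comm, Finset.mul_sum]
  refine Finset.sum_congr rfl fun j _ => ?_
  by_cases hj : 2 * j < k
  · rw [Finset.sum_eq_single (k - 2 * j), if_pos (by omega)]
    · have : ((k : ℤ) - 2 * j).toNat = k - 2 * j := by omega
      rw [this]
      ring
    · intro r _ hr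
      rw [if_neg (by omega), zero_mul]
    · intro h
      exact absurd (Finset.mem_Icc.2 (by omega)) h
  · have : ((k : ℤ) - 2 * j).toNat = 0 := by omega
    rw [this, Finset.sum_eq_zero]
    · simp
    · intro r hr
      have := Finset.mem_Icc.1 hr
      rw [if_neg (by omega), zero_mul]

/-- The coefficient of `z ^ (-r)` in `(z + b / z) ^ k`, which is `b ^ r` times that of `z ^ r`. -/
lemma integral_outer_circle (k r : ℕ) (hr : 1 ≤ r) {R : ℝ} (hR : 0 < R) (b : ℂ) :
    (∮ z in C(0, R), (z + b / z) ^ k * z ^ (r - 1))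
      = 2 * (π : ℂ) * Complex.I * ((betaCoef k r : ℂ) * b ^ ((k - r) / 2) * b ^ r) := by
  have h1 : (∮ z in C(0, R), (z + b / z) ^ k * z ^ (r - 1))
      = ∮ z in C(0, R), ∑ j ∈ range (k + 1),
        (k.choose j : ℂ) * b ^ (k - j) * (z ^ (2 * (j : ℤ) - k + r - 1) * 1) := by
    refine circleIntegral.integral_congr hR.le fun z hz => ?_
    have hz0 := sphere_ne_zero hR hz
    rw [add_pow, Finset.sum_mul]
    refine Finset.sum_congr rfl fun j hj => ?_
    have hj : j ≤ k := by simpa [Nat.lt_succ_iff] using hj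
    have h : (2 * (j : ℤ) - k + r - 1) = (j : ℤ) + ((r - 1 : ℕ) : ℤ) - ((k - j : ℕ) : ℤ) := by
      omega
    rw [h, zpow_sub₀ hz0, zpow_add₀ hz0, zpow_natCast, zpow_natCast, zpow_natCast, div_pow]
    ring
  rw [h1, circleIntegral.integral_fun_sum]
  swap
  · intro j _
    exact circleIntegrable_const_mul_zpow_mul hR _ _ continuousOn_const
  simp only [circleIntegral.integral_const_mul, mul_one, circle_integral_zpow hR, betaCoef_mul_pow,
    Finset.sum_mul, Finset.mul_sum]
  refine Finset.sum_congr rfl fun j _ => ?_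
  by_cases hj : k = r + 2 * j
  · have h : k - j = j + r := by omega
    rw [if_pos (by omega), if_pos hj, h, pow_add]
    ring
  · rw [if_neg (by omega), if_neg hj]
    simp

/-- Where `β(k, r)` is nonzero, `(k - r) / 2` is a natural number and truncated division is
exact. -/
lemma betaCoef_mul_rpow (k r : ℕ) (b : ℝ) :
    betaCoef k r * b ^ (((k : ℝ) - r) / 2) = betaCoef k r * b ^ ((k - r) / 2) := by
  by_cases h : r ≤ k ∧ (k - r) % 2 = 0
  · have hk : k = r + 2 * ((k - r) / 2) := by omega
    have : ((k : ℝ) - r) / 2 = (((k - r) / 2 : ℕ) : ℝ) := by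
      have : (k : ℝ) = r + 2 * (((k - r) / 2 : ℕ) : ℝ) := by exact_mod_cast hk
      linarith
    rw [this, Real.rpow_natCast]
  · simp [betaCoef, h]

theorem covariance_series_as_double_contour_integral
    (kp kq : ℕ) (hkp : 1 ≤ kp) (hkq : 1 ≤ kq)
    (bp bq γ ρ₁ ρ₂ : ℝ) (hbp : 0 < bp) (hbq : 0 < bq) (hγ : 0 ≤ γ)
    (hρ₁ : 0 < ρ₁) (hρ₂ : 0 < ρ₂) (hρ : γ * ρ₁ / bp < ρ₂) :
    (2 / (2 * (π : ℂ) * Complex.I) ^ 2) *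
      circleIntegral' (fun z =>
        circleIntegral' (fun w =>
          (z + (bp : ℂ) / z) ^ kp * (w + (bq : ℂ) / w) ^ kq *
            ((γ : ℂ) / (bp : ℂ)) * (((γ : ℂ) * z / (bp : ℂ) - w) ^ 2)⁻¹) ρ₂) ρ₁ =
    ((∑ r ∈ Finset.Icc 1 (min kp kq),
        2 * (r : ℝ) * betaCoef kp r * betaCoef kq r * γ ^ r
          * bp ^ (((kp : ℝ) - r) / 2) * bq ^ (((kq : ℝ) - r) / 2) : ℝ) : ℂ) := by
  have hbp' : (bp : ℂ) ≠ 0 := by exact_mod_cast hbp.ne'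
  simp only [circleIntegral'_eq]
  -- the inner integral, as a polynomial in `z`
  have h1 : (∮ z in C(0, ρ₁), ∮ w in C(0, ρ₂),
      (z + (bp : ℂ) / z) ^ kp * (w + (bq : ℂ) / w) ^ kq *
        ((γ : ℂ) / (bp : ℂ)) * (((γ : ℂ) * z / (bp : ℂ) - w) ^ 2)⁻¹)
      = ∮ z in C(0, ρ₁), ∑ r ∈ Icc 1 kq,
        (2 * (π : ℂ) * Complex.I * ((betaCoef kq r : ℂ) * (bq : ℂ) ^ ((kq - r) / 2) * r
          * ((γ : ℂ) / bp) ^ r)) * ((z + (bp : ℂ) / z) ^ kp * z ^ (r - 1)) := by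
    refine circleIntegral.integral_congr hρ₁.le fun z hz => ?_
    have hz' : ‖z‖ = ρ₁ := by simpa using hz
    have ha : ‖(γ : ℂ) / bp * z‖ < ρ₂ := by
      rw [norm_mul, norm_div, Complex.norm_real, Complex.norm_real, hz', Real.norm_of_nonneg hγ,
        Real.norm_of_nonneg hbp.le, div_mul_eq_mul_div]
      exact hρ
    have h2 : (∮ w in C(0, ρ₂), (z + (bp : ℂ) / z) ^ kp * (w + (bq : ℂ) / w) ^ kq *
        ((γ : ℂ) / (bp : ℂ)) * (((γ : ℂ) * z / (bp : ℂ) - w) ^ 2)⁻¹)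
        = ∮ w in C(0, ρ₂), ((z + (bp : ℂ) / z) ^ kp * ((γ : ℂ) / bp)) *
          ((w + (bq : ℂ) / w) ^ kq * ((w - (γ : ℂ) / bp * z) ^ 2)⁻¹) := by
      refine circleIntegral.integral_congr hρ₂.le fun w _ => ?_
      have : ((γ : ℂ) * z / (bp : ℂ) - w) ^ 2 = (w - (γ : ℂ) / bp * z) ^ 2 := by ring
      simp only [this]
      ring
    rw [h2, circleIntegral.integral_const_mul, integral_inner_circle kq hρ₂ ha, Finset.mul_sum,
      Finset.mul_sum]
    refine Finset.sum_congr rfl fun r hr => ?_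
    obtain ⟨s, rfl⟩ : ∃ s, r = s + 1 := ⟨r - 1, by have := Finset.mem_Icc.1 hr; omega⟩
    rw [Nat.add_sub_cancel, mul_pow]
    ring
  rw [h1, circleIntegral.integral_fun_sum]
  swap
  · intro r _
    refine ContinuousOn.circleIntegrable hρ₁.le ?_
    refine continuousOn_const.mul (((continuousOn_id.add
      (continuousOn_const.div continuousOn_id fun z hz => sphere_ne_zero hρ₁ hz)).pow _).mul
      (continuousOn_id.pow _))
  have hsub : Icc 1 (min kp kq) ⊆ Icc 1 kq := Finset.Icc_subset_Icc_right (min_le_right _ _)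
  rw [Finset.sum_subset hsub]
  swap
  · intro r hr hr'
    have h : ¬ r ≤ kp := by
      simp only [Finset.mem_Icc, le_min_iff] at hr hr'
      omega
    simp [betaCoef, h]
  rw [Finset.mul_sum, Complex.ofReal_sum]
  refine Finset.sum_congr rfl fun r hr => ?_
  rw [circleIntegral.integral_const_mul, integral_outer_circle kp r (Finset.mem_Icc.1 hr).1 hρ₁]
  have h3 : 2 * (r : ℝ) * betaCoef kp r * betaCoef kq r * γ ^ r
      * bp ^ (((kp : ℝ) - r) / 2) * bq ^ (((kq : ℝ) - r) / 2)
      = 2 * (r : ℝ) * γ ^ r * (betaCoef kp r * bp ^ ((kp - r) / 2))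
        * (betaCoef kq r * bq ^ ((kq - r) / 2)) := by
    rw [← betaCoef_mul_rpow, ← betaCoef_mul_rpow]
    ring
  have hpi := Complex.two_pi_I_ne_zero
  rw [h3, div_pow]
  push_cast
  generalize 2 * (π : ℂ) * Complex.I = c at hpi ⊢
  field_simp
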